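/- Let $d\ge2$ and let $\psi$ be a Schwartz function on $\mathbb{R}^d$ whose Fourier transform $\widehat\psi(\xi)=u(|\xi|)$ satisfies $|u(\rho)|\le\rho^{10d}$ for $0<\rho\le1$ and $|u(\rho)|\le C_N\rho^{-N}$ for $\rho\ge1$ (all $N$). Let $1\le p\le 2$ and let $F:[2^j,2^{j+1}]\times\mathbb{R}^d\to\mathbb{C}$ with $F(r,\cdot)$ radial in no special way. Then for each fixed $x$, $\int_0^\infty |u(\rho)|^2\rho^{\frac{2d}{p}-d-1}\Big|\int_{2^j}^{2^{j+1}}r^{d-1}\mathcal{J}(r\rho)F(r,x)\,dr\Big|^2 d\rho \le C\int_{2^j}^{2^{j+1}}|F(r,x)|^2 r^{d-1}\,dr$, with $C$ independent of $j$ and $x$, where $\mathcal{J}(s)=c(d)s^{-(d-2)/2}J_{(d-2)/2}(s)$. -/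

import Mathlib

open MeasureTheory ENNReal
open scoped RealInnerProductSpace

section Plancherel

open scoped FourierTransform ContDiff

variable {V : Type*} [NormedAddCommGroup V] [InnerProductSpace ℝ V] [FiniteDimensional ℝ V]
  [MeasurableSpace V] [BorelSpace V]

theorem Real.continuous_fourier_of_integrable {f : V → ℂ} (hf : Integrable f) :
    Continuous (𝓕 f) :=
  VectorFourier.fourierIntegral_continuous Real.continuous_fourierChar
    (innerSL ℝ).continuous₂ hf

/-- The `L²` Fourier transform of an integrable function is given by the Fourier integral. -/
theorem MeasureTheory.MemLp.coeFn_fourier_toLp {f : V → ℂ} (hf : Integrable f)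
    (hf2 : MemLp f 2) : (𝓕 (hf2.toLp f) : Lp ℂ 2 (volume : Measure V)) =ᵐ[volume] 𝓕 f := by
  refine ae_eq_of_integral_contDiff_smul_eq ?_ ?_ fun g hg hgc ↦ ?_
  · exact (Lp.memLp _).locallyIntegrable (by norm_num)
  · exact (Real.continuous_fourier_of_integrable hf).locallyIntegrable
  · have hgc' : HasCompactSupport fun x ↦ (g x : ℂ) :=
      hgc.comp_left (g := ((↑) : ℝ → ℂ)) Complex.ofReal_zero
    have hg' : ContDiff ℝ ∞ fun x ↦ (g x : ℂ) := Complex.ofRealCLM.contDiff.comp hg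
    let φ : SchwartzMap V ℂ := hgc'.toSchwartzMap hg'
    have h1 := congrArg (fun T ↦ T φ) (Lp.fourier_toTemperedDistribution_eq hf2.toLp)
    simp only [TemperedDistribution.fourier_apply, Lp.toTemperedDistribution_apply] at h1
    have h2 : ∫ x, (𝓕 (φ : V → ℂ)) x • f x = ∫ x, φ x • 𝓕 f x :=
      VectorFourier.integral_fourierIntegral_smul_eq_flip (L := innerₗ V)
        Real.continuous_fourierChar continuous_inner φ.integrable hf |>.trans (by
          simp only [flip_innerₗ]; rfl)
    calc ∫ x, g x • (𝓕 (hf2.toLp f) : Lp ℂ 2 (volume : Measure V)) x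
        = ∫ x, φ x • (𝓕 (hf2.toLp f) : Lp ℂ 2 (volume : Measure V)) x := by simp [φ]
      _ = ∫ x, (𝓕 (φ : V → ℂ)) x • f x := by
        rw [← h1, SchwartzMap.fourier_coe]
        refine integral_congr_ae ?_
        filter_upwards [hf2.coeFn_toLp] with x hx
        rw [hx]
      _ = ∫ x, g x • 𝓕 f x := by rw [h2]; simp [φ]

/-- Plancherel's theorem for the Fourier integral of functions in `L¹ ∩ L²`. -/
theorem MeasureTheory.MemLp.eLpNorm_fourier_eq {f : V → ℂ} (hf : Integrable f)
    (hf2 : MemLp f 2) : eLpNorm (𝓕 f) 2 = eLpNorm f 2 := by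
  rw [← eLpNorm_congr_ae (hf2.coeFn_fourier_toLp hf), ← eLpNorm_congr_ae hf2.coeFn_toLp,
    ← Lp.enorm_def, ← Lp.enorm_def, ← ofReal_norm, ← ofReal_norm, Lp.norm_fourier_eq]

theorem MeasureTheory.MemLp.lintegral_enorm_fourier_sq {f : V → ℂ} (hf : Integrable f)
    (hf2 : MemLp f 2) : ∫⁻ ξ, ‖𝓕 f ξ‖ₑ ^ 2 = ∫⁻ x, ‖f x‖ₑ ^ 2 := by
  have h := congrArg (· ^ 2) (hf2.eLpNorm_fourier_eq hf)
  have key (g : V → ℂ) : eLpNorm g 2 ^ 2 = ∫⁻ x, ‖g x‖ₑ ^ 2 := by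
    simpa using eLpNorm_nnreal_pow_eq_lintegral (f := g) (μ := volume) (p := 2) (by norm_num)
  simpa only [key] using h

/-- The Fourier transform of a radial function is radial. -/
theorem Real.fourier_comp_norm_eq_of_norm_eq (h : ℝ → ℂ) {ξ η : V} (hξη : ‖ξ‖ = ‖η‖) :
    𝓕 (fun x : V ↦ h ‖x‖) ξ = 𝓕 (fun x : V ↦ h ‖x‖) η := by
  have := Real.fourier_comp_linearIsometry ((ℝ ∙ (ξ - η))ᗮ.reflection) (fun x : V ↦ h ‖x‖) ξ
  rw [Submodule.reflection_sub hξη] at this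
  rw [← this]
  simp [Function.comp_def]

end Plancherel

section Polar

open Metric Set Module

variable {E : Type*} [NormedAddCommGroup E] [NormedSpace ℝ E] [MeasurableSpace E]
  [FiniteDimensional ℝ E] [BorelSpace E] (μ : Measure E)
  [μ.IsAddHaarMeasure]

/-- Integration of a radial function in polar coordinates. -/
theorem MeasureTheory.lintegral_fun_norm_addHaar [Nontrivial E] {f : ℝ → ℝ≥0∞}
    (hf : Measurable f) :
    ∫⁻ x, f ‖x‖ ∂μ = μ.toSphere univ *
      ∫⁻ r in Ioi (0 : ℝ), ENNReal.ofReal (r ^ (finrank ℝ E - 1)) * f r := by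
  calc ∫⁻ x, f ‖x‖ ∂μ = ∫⁻ x : ({(0)}ᶜ : Set E), f ‖x.1‖ ∂(μ.comap (↑)) := by
        rw [lintegral_subtype_comap (measurableSet_singleton _).compl fun x ↦ f ‖x‖,
          restrict_compl_singleton]
    _ = ∫⁻ x, f x.2 ∂μ.toSphere.prod (.volumeIoiPow (finrank ℝ E - 1)) := by
        simpa using μ.measurePreserving_homeomorphUnitSphereProd.lintegral_comp
          (f := fun x ↦ f x.2) (by fun_prop)
    _ = _ := by
        rw [lintegral_prod _ (by fun_prop)]
        simp only [lintegral_const]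
        rw [mul_comm, Measure.volumeIoiPow, lintegral_withDensity_eq_lintegral_mul _ (by fun_prop)
          (by fun_prop)]
        congr 1
        exact lintegral_subtype_comap measurableSet_Ioi
          fun r ↦ ENNReal.ofReal (r ^ (finrank ℝ E - 1)) * f r

/-- Integration in polar coordinates. -/
theorem MeasureTheory.integral_eq_integral_Ioi_integral_sphere [Nontrivial E] {f : E → ℂ}
    (hf : Integrable f μ) :
    ∫ x, f x ∂μ = ∫ r in Ioi (0 : ℝ),
      r ^ (finrank ℝ E - 1) • ∫ y : sphere (0 : E) 1, f (r • (y : E)) ∂μ.toSphere := by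
  have hmp := μ.measurePreserving_homeomorphUnitSphereProd
  have hme : MeasurableEmbedding (homeomorphUnitSphereProd E) :=
    (homeomorphUnitSphereProd E).measurableEmbedding
  have hcomp (x : ({(0)}ᶜ : Set E)) : f x = (fun z : sphere (0 : E) 1 × Ioi (0 : ℝ) ↦
      f (z.2.1 • z.1.1)) (homeomorphUnitSphereProd E x) := by
    have := congrArg Subtype.val ((homeomorphUnitSphereProd E).symm_apply_apply x)
    rw [homeomorphUnitSphereProd_symm_apply_coe] at this
    simp only [this]
  have hint : Integrable (fun z : sphere (0 : E) 1 × Ioi (0 : ℝ) ↦ f (z.2.1 • z.1.1))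
      (μ.toSphere.prod (.volumeIoiPow (finrank ℝ E - 1))) := by
    rw [← hmp.integrable_comp_emb hme]
    have : Integrable (fun x : ({(0)}ᶜ : Set E) ↦ f x) (μ.comap (↑)) :=
      (integrableOn_iff_comap_subtypeVal (measurableSet_singleton _).compl).1 hf.integrableOn
    exact this.congr (.of_forall hcomp)
  calc ∫ x, f x ∂μ = ∫ x : ({(0)}ᶜ : Set E), f x ∂(μ.comap (↑)) := by
        rw [integral_subtype_comap (measurableSet_singleton _).compl f,
          restrict_compl_singleton]
    _ = ∫ z, f (z.2.1 • z.1.1) ∂μ.toSphere.prod (.volumeIoiPow (finrank ℝ E - 1)) := by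
        rw [← hmp.integral_comp hme]
        exact integral_congr_ae (.of_forall hcomp)
    _ = _ := by
        rw [integral_prod_symm _ hint]
        simp only [Measure.volumeIoiPow, ENNReal.ofReal]
        rw [integral_withDensity_eq_integral_smul (by fun_prop),
          integral_subtype_comap measurableSet_Ioi fun a ↦ Real.toNNReal (a ^ (finrank ℝ E - 1)) •
            ∫ y : sphere (0 : E) 1, f (a • (y : E)) ∂μ.toSphere]
        refine setIntegral_congr_fun measurableSet_Ioi fun r hr ↦ ?_
        simp only [NNReal.smul_def]
        rw [Real.coe_toNNReal _ (pow_nonneg hr.out.le _)]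

end Polar

section Radial

open Metric Set Module
open scoped FourierTransform

variable {V : Type*} [NormedAddCommGroup V] [InnerProductSpace ℝ V] [FiniteDimensional ℝ V]
  [MeasurableSpace V] [BorelSpace V]

/-- The Fourier transform of a radial function as an integral against the Fourier transform of
the sphere measure. -/
theorem Real.fourier_comp_norm_eq_integral_Ioi [Nontrivial V] {f : ℝ → ℂ}
    (hf : Integrable fun x : V ↦ f ‖x‖) (e : V) (ρ : ℝ) :
    𝓕 (fun x : V ↦ f ‖x‖) (((2 * Real.pi)⁻¹ * ρ) • e) =
      ∫ r in Ioi (0 : ℝ), ((r ^ (finrank ℝ V - 1) : ℝ) : ℂ) *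
        (∫ y : sphere (0 : V) 1, Complex.exp (-Complex.I * (((r * ρ : ℝ) : ℂ) * ⟪(y : V), e⟫))
          ∂(volume : Measure V).toSphere) * f r := by
  have hint : Integrable fun x : V ↦
      Complex.exp (↑(-2 * Real.pi * ⟪x, ((2 * Real.pi)⁻¹ * ρ) • e⟫) * Complex.I) • f ‖x‖ := by
    refine hf.bdd_mul (c := 1) (by fun_prop) (.of_forall fun x ↦ ?_)
    rw [Complex.norm_exp_ofReal_mul_I]
  rw [Real.fourier_eq', integral_eq_integral_Ioi_integral_sphere volume hint]
  refine setIntegral_congr_fun measurableSet_Ioi fun r hr ↦ ?_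
  have hr' : 0 < r := hr
  rw [mul_assoc, ← integral_mul_const, Complex.real_smul]
  congr 2
  ext y
  have hy : ‖r • (y : V)‖ = r := by
    rw [norm_smul, norm_eq_of_mem_sphere, Real.norm_of_nonneg hr'.le, mul_one]
  rw [hy, smul_eq_mul]
  congr 2
  rw [real_inner_smul_left, real_inner_smul_right]
  push_cast
  field_simp

/-- Plancherel's theorem for radial functions, in polar coordinates. -/
theorem lintegral_Ioi_radial_fourier_sq [Nontrivial V] {f : ℝ → ℂ} (hfm : Measurable f)
    (hf : Integrable fun x : V ↦ f ‖x‖) (hf2 : MemLp (fun x : V ↦ f ‖x‖) 2)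
    {e : V} (he : ‖e‖ = 1) :
    ∫⁻ ρ in Ioi (0 : ℝ), ENNReal.ofReal (ρ ^ (finrank ℝ V - 1)) *
        ‖∫ r in Ioi (0 : ℝ), ((r ^ (finrank ℝ V - 1) : ℝ) : ℂ) *
          (∫ y : sphere (0 : V) 1, Complex.exp (-Complex.I * (((r * ρ : ℝ) : ℂ) * ⟪(y : V), e⟫))
            ∂(volume : Measure V).toSphere) * f r‖ₑ ^ 2 =
      ENNReal.ofReal ((2 * Real.pi) ^ finrank ℝ V) *
        ∫⁻ r in Ioi (0 : ℝ), ENNReal.ofReal (r ^ (finrank ℝ V - 1)) * ‖f r‖ₑ ^ 2 := by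
  simp only [← Real.fourier_comp_norm_eq_integral_Ioi hf]
  set H : V → ℂ := fun x ↦ f ‖x‖
  have hpos : (0 : ℝ) < 2 * Real.pi := by positivity
  have hcont : Continuous (𝓕 H) := Real.continuous_fourier_of_integrable hf
  have hsphere : (volume : Measure V).toSphere univ ≠ 0 :=
    Measure.measure_univ_ne_zero.2 (volume : Measure V).toSphere_ne_zero
  have hmeas : Measurable fun ρ : ℝ ↦ ‖𝓕 H (((2 * Real.pi)⁻¹ * ρ) • e)‖ₑ ^ 2 := by
    have : Continuous fun ρ : ℝ ↦ 𝓕 H (((2 * Real.pi)⁻¹ * ρ) • e) := hcont.comp (by fun_prop)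
    exact this.measurable.enorm.pow_const 2
  have hleft := lintegral_fun_norm_addHaar (volume : Measure V) hmeas
  have hright := lintegral_fun_norm_addHaar (volume : Measure V) (hfm.enorm.pow_const 2)
  have hdil : ∫⁻ ξ : V, ‖𝓕 H (((2 * Real.pi)⁻¹ * ‖ξ‖) • e)‖ₑ ^ 2 =
      ENNReal.ofReal ((2 * Real.pi) ^ finrank ℝ V) * ∫⁻ x : V, ‖f ‖x‖‖ₑ ^ 2 := by
    calc ∫⁻ ξ : V, ‖𝓕 H (((2 * Real.pi)⁻¹ * ‖ξ‖) • e)‖ₑ ^ 2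
        = ∫⁻ ξ : V, ‖𝓕 H ((2 * Real.pi)⁻¹ • ξ)‖ₑ ^ 2 := by
          refine lintegral_congr fun ξ ↦ ?_
          rw [Real.fourier_comp_norm_eq_of_norm_eq f
            (η := (2 * Real.pi)⁻¹ • ξ) (by simp [norm_smul, he])]
      _ = ∫⁻ ξ, ‖𝓕 H ξ‖ₑ ^ 2 ∂(Measure.map ((2 * Real.pi)⁻¹ • ·) (volume : Measure V)) :=
          (lintegral_map (hcont.measurable.enorm.pow_const 2) (measurable_const_smul _)).symm
      _ = ENNReal.ofReal ((2 * Real.pi) ^ finrank ℝ V) * ∫⁻ x : V, ‖f ‖x‖‖ₑ ^ 2 := by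
          rw [Measure.map_addHaar_smul _ (inv_ne_zero hpos.ne'), lintegral_smul_measure,
            hf2.lintegral_enorm_fourier_sq hf, inv_pow, inv_inv, abs_of_pos (by positivity),
            smul_eq_mul]
  rw [hleft, hright, mul_left_comm] at hdil
  exact (ENNReal.mul_right_inj hsphere (measure_ne_top _ _)).1 hdil

end Radial

/-- A function on the half-line that is square integrable with respect to
`r ^ (n - 1) dr` gives a radial function in `L²`. -/
theorem memLp_two_comp_norm {V : Type*} [NormedAddCommGroup V] [NormedSpace ℝ V]
    [FiniteDimensional ℝ V] [MeasurableSpace V] [BorelSpace V] [Nontrivial V] (μ : Measure V)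
    [μ.IsAddHaarMeasure] {f : ℝ → ℂ} (hfm : Measurable f)
    (hf : ∫⁻ r in Set.Ioi (0 : ℝ),
      ENNReal.ofReal (r ^ (Module.finrank ℝ V - 1)) * ‖f r‖ₑ ^ 2 ≠ ∞) :
    MemLp (fun x : V ↦ f ‖x‖) 2 μ := by
  refine ⟨(hfm.comp measurable_norm).aestronglyMeasurable, ?_⟩
  have key : eLpNorm (fun x : V ↦ f ‖x‖) 2 μ ^ 2 = ∫⁻ x, ‖f ‖x‖‖ₑ ^ 2 ∂μ := by
    simpa using eLpNorm_nnreal_pow_eq_lintegral (f := fun x : V ↦ f ‖x‖) (μ := μ) (p := 2)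
      (by norm_num)
  refine (ENNReal.pow_lt_top_iff.1 ?_).resolve_right two_ne_zero
  rw [key, lintegral_fun_norm_addHaar μ (hfm.enorm.pow_const 2)]
  exact ENNReal.mul_lt_top (measure_lt_top _ _) hf.lt_top

/-- A function that vanishes to high order at `0` and is bounded at infinity absorbs the
power weight into `ρ ^ (d - 1)`. -/
theorem sq_norm_mul_rpow_le_mul_pow {d : ℕ} (hd : 1 ≤ d) {u : ℝ → ℂ}
    (hu1 : ∀ ρ : ℝ, 0 < ρ → ρ ≤ 1 → ‖u ρ‖ ≤ ρ ^ d) {M : ℝ}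
    (hu2 : ∀ ρ : ℝ, 1 ≤ ρ → ‖u ρ‖ ≤ M) {p : ℝ} (hp1 : 1 ≤ p) (hp2 : p ≤ 2) :
    ∀ ρ : ℝ, 0 < ρ → ‖u ρ‖ ^ 2 * ρ ^ (2 * d / p - d - 1) ≤ (1 + M ^ 2) * ρ ^ (d - 1) := by
  intro ρ hρ
  have hd0 : (0 : ℝ) < d := by exact_mod_cast hd
  have hlow : (d : ℝ) ≤ 2 * d / p := by rw [le_div_iff₀ (by linarith)]; nlinarith
  have hup : 2 * d / p ≤ 2 * d := div_le_self (by positivity) hp1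
  rw [← Real.rpow_natCast ρ (d - 1), Nat.cast_sub hd, Nat.cast_one]
  rcases le_total ρ 1 with h | h
  · calc ‖u ρ‖ ^ 2 * ρ ^ (2 * d / p - d - 1)
        ≤ (ρ ^ d) ^ 2 * ρ ^ (2 * d / p - d - 1) := by gcongr; exact hu1 ρ hρ h
      _ = ρ ^ ((d : ℝ) * 2 + (2 * d / p - d - 1)) := by
        rw [Real.rpow_add hρ, Real.rpow_mul hρ.le, Real.rpow_natCast, Real.rpow_ofNat]
      _ ≤ ρ ^ ((d : ℝ) - 1) := Real.rpow_le_rpow_of_exponent_ge hρ h (by linarith)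
      _ ≤ (1 + M ^ 2) * ρ ^ ((d : ℝ) - 1) :=
        le_mul_of_one_le_left (by positivity) (by nlinarith [sq_nonneg M])
  · calc ‖u ρ‖ ^ 2 * ρ ^ (2 * d / p - d - 1)
        ≤ M ^ 2 * ρ ^ ((d : ℝ) - 1) := by
          gcongr
          · exact hu2 ρ h
          · linarith
      _ ≤ (1 + M ^ 2) * ρ ^ ((d : ℝ) - 1) := by gcongr; linarith

/-- The weighted `L²` estimate for integrals against the Bessel-type kernel
`𝒥(s) = c(d) s^{-(d-2)/2} J_{(d-2)/2}(s)` (realized as the Fourier transform of the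
unit sphere measure in a fixed direction): for `1 ≤ p ≤ 2`,
`∫_0^∞ |u(ρ)|² ρ^{2d/p-d-1} |∫_{2^j}^{2^{j+1}} r^{d-1} 𝒥(rρ) F(r) dr|² dρ
  ≤ C ∫_{2^j}^{2^{j+1}} |F(r)|² r^{d-1} dr`, uniformly in `j` and `F`. -/
theorem statement11 (d : ℕ) (hd : 2 ≤ d) (u : ℝ → ℂ)
    (hu1 : ∀ ρ : ℝ, 0 < ρ → ρ ≤ 1 → ‖u ρ‖ ≤ ρ ^ (10 * d))
    (hu2 : ∀ N : ℕ, ∃ C_N : ℝ, ∀ ρ : ℝ, 1 ≤ ρ → ‖u ρ‖ ≤ C_N * ρ ^ (-(N : ℝ)))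
    (p : ℝ) (hp1 : 1 ≤ p) (hp2 : p ≤ 2)
    (J : ℝ → ℂ)
    (hJ : ∀ s : ℝ, J s =
      ∫ y : Metric.sphere (0 : EuclideanSpace ℝ (Fin d)) 1,
        Complex.exp (-Complex.I *
          (s * ⟪(y : EuclideanSpace ℝ (Fin d)),
            EuclideanSpace.single (⟨0, by omega⟩ : Fin d) (1 : ℝ)⟫))
        ∂(volume : Measure (EuclideanSpace ℝ (Fin d))).toSphere) :
    ∃ C : ℝ, 0 < C ∧
      ∀ (j : ℕ) (F : ℝ → ℂ), Measurable F →
        (∫⁻ ρ in Set.Ioi (0 : ℝ),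
            (‖u ρ‖₊ : ℝ≥0∞) ^ 2 * ENNReal.ofReal (ρ ^ (2 * d / p - d - 1)) *
              (‖∫ r in Set.Icc ((2 : ℝ) ^ j) (2 ^ (j + 1)),
                ((r ^ (d - 1) : ℝ) : ℂ) * J (r * ρ) * F r‖₊ : ℝ≥0∞) ^ 2) ≤
          ENNReal.ofReal C *
            ∫⁻ r in Set.Icc ((2 : ℝ) ^ j) (2 ^ (j + 1)),
              (‖F r‖₊ : ℝ≥0∞) ^ 2 * ENNReal.ofReal (r ^ (d - 1)) := by
  obtain ⟨M, hM⟩ := hu2 0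
  have hbound := sq_norm_mul_rpow_le_mul_pow (d := d) (M := M) (by omega)
    (fun ρ h0 h1 ↦ (hu1 ρ h0 h1).trans (pow_le_pow_of_le_one h0.le h1 (by omega)))
    (fun ρ h ↦ by simpa using hM ρ h) hp1 hp2
  refine ⟨(1 + M ^ 2) * (2 * Real.pi) ^ d, by positivity, fun j F hF ↦ ?_⟩
  set S : Set ℝ := Set.Icc ((2 : ℝ) ^ j) (2 ^ (j + 1))
  have hSm : MeasurableSet S := measurableSet_Icc
  have hS0 : S ⊆ Set.Ioi 0 := fun r hr ↦ lt_of_lt_of_le (by positivity) hr.1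
  by_cases htop : ∫⁻ r in S, (‖F r‖₊ : ℝ≥0∞) ^ 2 * ENNReal.ofReal (r ^ (d - 1)) = ∞
  · rw [htop, ENNReal.mul_top (by simpa using by positivity)]
    exact le_top
  let V := EuclideanSpace ℝ (Fin d)
  have hfin : Module.finrank ℝ V = d := by simp [V]
  have : Nontrivial V := Module.nontrivial_of_finrank_pos (R := ℝ) (by omega)
  set f : ℝ → ℂ := S.indicator F with hf
  have hfm : Measurable f := hF.indicator hSm
  have hright : ∫⁻ r in Set.Ioi (0 : ℝ),
      ENNReal.ofReal (r ^ (Module.finrank ℝ V - 1)) * ‖f r‖ₑ ^ 2 =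
        ∫⁻ r in S, (‖F r‖₊ : ℝ≥0∞) ^ 2 * ENNReal.ofReal (r ^ (d - 1)) := by
    rw [hfin, ← Set.inter_eq_left.2 hS0, ← Measure.restrict_restrict hSm,
      ← lintegral_indicator hSm]
    refine lintegral_congr fun r ↦ ?_
    by_cases hr : r ∈ S <;> simp [hf, hr, mul_comm, enorm_eq_nnnorm]
  have hf2 : MemLp (fun x : V ↦ f ‖x‖) 2 :=
    memLp_two_comp_norm volume hfm (hright ▸ htop)
  have hfi : Integrable fun x : V ↦ f ‖x‖ := by
    rw [← memLp_one_iff_integrable]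
    refine hf2.mono_exponent_of_measure_support_ne_top (s := Metric.closedBall 0 (2 ^ (j + 1)))
      (fun x hx ↦ Set.indicator_of_notMem (fun h ↦ hx ?_) _) measure_closedBall_lt_top.ne
      one_le_two
    simpa using h.2
  let e : V := EuclideanSpace.single (⟨0, by omega⟩ : Fin d) (1 : ℝ)
  have hplanch := lintegral_Ioi_radial_fourier_sq hfm hfi hf2 (e := e)
    ((PiLp.norm_single _ _ _ _).trans norm_one)
  rw [hright] at hplanch
  simp only [hfin] at hplanch
  have hinner (ρ : ℝ) : ∫ r in S, ((r ^ (d - 1) : ℝ) : ℂ) * J (r * ρ) * F r =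
      ∫ r in Set.Ioi (0 : ℝ), ((r ^ (d - 1) : ℝ) : ℂ) *
        (∫ y : Metric.sphere (0 : V) 1,
          Complex.exp (-Complex.I * (((r * ρ : ℝ) : ℂ) * ⟪(y : V), e⟫))
            ∂(volume : Measure V).toSphere) * f r := by
    rw [← Set.inter_eq_left.2 hS0, ← Measure.restrict_restrict hSm, ← integral_indicator hSm]
    refine integral_congr_ae (.of_forall fun r ↦ ?_)
    by_cases hr : r ∈ S <;> simp [hf, hr, hJ, e, V]
  calc _ ≤ ∫⁻ ρ in Set.Ioi (0 : ℝ), ENNReal.ofReal (1 + M ^ 2) *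
        (ENNReal.ofReal (ρ ^ (d - 1)) *
          ‖∫ r in S, ((r ^ (d - 1) : ℝ) : ℂ) * J (r * ρ) * F r‖ₑ ^ 2) := by
        refine setLIntegral_mono' measurableSet_Ioi fun ρ hρ ↦ ?_
        rw [← mul_assoc, ← ENNReal.ofReal_mul (by positivity)]
        refine mul_le_mul_left ?_ _
        rw [← enorm_eq_nnnorm, ← ofReal_norm, ← ENNReal.ofReal_pow (norm_nonneg _),
          ← ENNReal.ofReal_mul (by positivity)]
        exact ENNReal.ofReal_le_ofReal (hbound ρ hρ)
    _ = _ := by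
        rw [lintegral_const_mul' _ _ ENNReal.ofReal_ne_top, ENNReal.ofReal_mul (by positivity),
          mul_assoc, ← hplanch]
        simp only [hinner]
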